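/- arXiv:1711.04008 — 5 statements merged into one kernel-verified Lean document; each statement's English description precedes it below -/
import Mathlib

section
/- Let k be a field complete with respect to a non-archimedean absolute value, let V and W be normed k-vector spaces, and equip V ⊗_k W with the tensor norm ‖t‖_{V⊗W} = inf max_{1≤i≤N} ‖vᵢ‖_V·‖wᵢ‖_W, the infimum ranging over all representations t = Σ_{i=1}^N vᵢ ⊗ wᵢ. Let α > 1 and let v₁, …, vₙ be a linearly independent α-cartesian family in V. Then for all w₁, …, wₙ ∈ W, setting t = Σ_{i=1}^n vᵢ ⊗ wᵢ, one has α⁻¹ · max_{1≤i≤n} ‖vᵢ‖_V·‖wᵢ‖_W ≤ ‖t‖_{V⊗W} ≤ max_{1≤i≤n} ‖vᵢ‖_V·‖wᵢ‖_W. -/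
/-!
The point is that, for a subspace `S` of `V` and finitely many vectors of `V`, some linear
retraction of `V` onto `S` does not increase the norm of any of those vectors. In codimension one,
with `S` the kernel of a functional `ψ`, project along the vector `u` of the given finite set that
minimizes `‖u‖ / ‖ψ u‖`; the general case follows one vector at a time. Since a representation of a
tensor involves only finitely many vectors, the tensor norm on `S ⊗ W` is the restriction of the one
on `V ⊗ W`, so one may take `S` to be the span of the `v i`. There the cartesian condition bounds
the `i`-th coordinate functional, and contracting `∑ i, v i ⊗ w i` with it gives `w i`.
-/

open TensorProduct in
/-- The tensor norm on `V ⊗[k] W`: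
`‖t‖ = inf max_{1 ≤ i ≤ N} ‖v i‖ * ‖w i‖`, the infimum ranging over all representations
`t = ∑ i, v i ⊗ w i`. -/
noncomputable def tensorNorm {k V W : Type*} [NormedField k]
    [NormedAddCommGroup V] [NormedSpace k V]
    [NormedAddCommGroup W] [NormedSpace k W]
    (t : V ⊗[k] W) : ℝ :=
  sInf { M : ℝ | ∃ (n : ℕ) (v : Fin n → V) (w : Fin n → W),
    t = ∑ i, v i ⊗ₜ[k] w i ∧ M = ⨆ i, ‖v i‖ * ‖w i‖ }

open TensorProduct LinearMap

theorem sup_span_singleton_inf_ker {k V : Type*} [Field k] [AddCommGroup V] [Module k V]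
    {S : Submodule k V} {ψ : V →ₗ[k] k} {x : V} (hS : S ≤ ker ψ) (hx : ψ x ≠ 0) :
    (S ⊔ Submodule.span k {x}) ⊓ ker ψ = S := by
  refine le_antisymm ?_ (le_inf le_sup_left hS)
  rintro u ⟨hu, hψu⟩
  obtain ⟨s, hs, a, rfl⟩ : ∃ s ∈ S, ∃ a : k, s + a • x = u := by
    simpa [Submodule.mem_sup, Submodule.mem_span_singleton] using hu
  have ha : a = 0 := by simpa [mem_ker.1 (hS hs), hx] using hψu
  simpa [ha] using hs

section Retraction

variable {k V : Type*} [NormedField k] [SeminormedAddCommGroup V] [NormedSpace k V]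

theorem exists_mem_span_apply_eq_one_norm_smul_le {ψ : V →ₗ[k] k} {T : Finset V}
    (hψ : ∃ x ∈ T, ψ x ≠ 0) :
    ∃ f ∈ Submodule.span k (T : Set V), ψ f = 1 ∧ ∀ y ∈ T, ‖ψ y • f‖ ≤ ‖y‖ := by
  classical
  obtain ⟨x, hxT, hx⟩ := hψ
  obtain ⟨u, hu, hmin⟩ := (T.filter (ψ · ≠ 0)).exists_min_image (fun y => ‖y‖ / ‖ψ y‖)
    ⟨x, Finset.mem_filter.2 ⟨hxT, hx⟩⟩
  obtain ⟨huT, hψu⟩ := Finset.mem_filter.1 hu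
  refine ⟨(ψ u)⁻¹ • u, Submodule.smul_mem _ _ (Submodule.subset_span huT), ?_, fun y hy => ?_⟩
  · rw [map_smul, smul_eq_mul, inv_mul_cancel₀ hψu]
  · by_cases hψy : ψ y = 0
    · simp [hψy]
    · have hle : ‖u‖ / ‖ψ u‖ ≤ ‖y‖ / ‖ψ y‖ := hmin y (Finset.mem_filter.2 ⟨hy, hψy⟩)
      rw [le_div_iff₀' (norm_pos_iff.2 hψy)] at hle
      rwa [norm_smul, norm_smul, norm_inv, inv_mul_eq_div]

theorem exists_isProj_ker_norm_le [IsUltrametricDist V] {ψ : V →ₗ[k] k} {T : Finset V}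
    (hψ : ∃ x ∈ T, ψ x ≠ 0) :
    ∃ Q : V →ₗ[k] V, IsProj (ker ψ) Q ∧ (∀ x, x - Q x ∈ Submodule.span k (T : Set V)) ∧
      ∀ y ∈ T, ‖Q y‖ ≤ ‖y‖ := by
  obtain ⟨f, hfT, hψf, hf⟩ := exists_mem_span_apply_eq_one_norm_smul_le hψ
  set Q : V →ₗ[k] V := LinearMap.id - ψ.smulRight f
  have hQ (x : V) : Q x = x - ψ x • f := rfl
  refine ⟨Q, ⟨fun x => ?_, fun x hx => ?_⟩, fun x => ?_, fun y hy => ?_⟩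
  · rw [mem_ker, hQ, map_sub, map_smul, hψf, smul_eq_mul, mul_one, sub_self]
  · rw [hQ, mem_ker.1 hx, zero_smul, sub_zero]
  · rw [hQ, sub_sub_cancel]
    exact Submodule.smul_mem _ _ hfT
  · calc ‖Q y‖ = ‖y + -(ψ y • f)‖ := by rw [hQ, sub_eq_add_neg]
      _ ≤ max ‖y‖ ‖-(ψ y • f)‖ := IsUltrametricDist.norm_add_le_max _ _
      _ ≤ ‖y‖ := max_le le_rfl (by simpa using hf y hy)

theorem exists_retraction_norm_le [IsUltrametricDist V] (S : Submodule k V) (T : Finset V) :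
    ∃ P : V →ₗ[k] S, P ∘ₗ S.subtype = LinearMap.id ∧ ∀ x ∈ T, ‖P x‖ ≤ ‖x‖ := by
  classical
  induction T using Finset.induction_on generalizing S with
  | empty => simpa using LinearMap.exists_extend (LinearMap.id : S →ₗ[k] S)
  | insert x T _ ih =>
    by_cases hxS : x ∈ S
    · obtain ⟨P, hPS, hPT⟩ := ih S
      have hPx : P x = ⟨x, hxS⟩ := LinearMap.congr_fun hPS ⟨x, hxS⟩
      exact ⟨P, hPS, Finset.forall_mem_insert .. |>.2 ⟨by simp [hPx], hPT⟩⟩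
    obtain ⟨ψ, hψx, hψS⟩ := Submodule.exists_le_ker_of_notMem hxS
    set S' := S ⊔ Submodule.span k {x}
    have hxS' : x ∈ S' := Submodule.mem_sup_right (Submodule.mem_span_singleton_self x)
    obtain ⟨P', hPS', hPT'⟩ := ih S'
    have hP (s : V) (hs : s ∈ S') : (P' s : V) = s :=
      congrArg Subtype.val (LinearMap.congr_fun hPS' ⟨s, hs⟩)
    obtain ⟨Q, hQ, hQspan, hQT⟩ := exists_isProj_ker_norm_le (ψ := ψ)
      (T := (insert x T).image fun y => (P' y : V)) ⟨x, by simp [hP x hxS'], hψx⟩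
    have hQS' (u : V) (hu : u ∈ S') : Q u ∈ S' := by
      refine (Submodule.sub_mem_iff_right _ hu).1 (Submodule.span_le.2 ?_ (hQspan u))
      simp [Set.subset_def]
    have hQP' (y : V) : Q (P' y) ∈ S :=
      (sup_span_singleton_inf_ker hψS hψx).le ⟨hQS' _ (P' y).2, hQ.map_mem _⟩
    refine ⟨(Q ∘ₗ S'.subtype ∘ₗ P').codRestrict S hQP', ?_, fun y hy => ?_⟩
    · have hQs (s : S) : Q (P' s) = s := by
        rw [hP s (Submodule.mem_sup_left s.2), hQ.map_id s (hψS s.2)]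
      exact LinearMap.ext fun s => Subtype.ext (hQs s)
    · have hPy : ‖P' y‖ ≤ ‖y‖ := by
        rcases Finset.mem_insert.1 hy with rfl | hyT
        · rw [← Submodule.norm_coe, hP _ hxS']
        · exact hPT' y hyT
      exact (hQT _ (Finset.mem_image_of_mem _ hy)).trans hPy

end Retraction

theorem exists_linearMap_apply_sum_smul_eq {k V ι : Type*} [Field k] [AddCommGroup V] [Module k V]
    [Fintype ι] {v : ι → V} {i : ι} (h : ∀ c : ι → k, ∑ j, c j • v j = 0 → c i = 0) :
    ∃ ξ : V →ₗ[k] k, ∀ c : ι → k, ξ (∑ j, c j • v j) = c i := by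
  set f := Fintype.linearCombination k v
  obtain ⟨g, hg⟩ := f.rangeRestrict.exists_rightInverse_of_surjective f.range_rangeRestrict
  obtain ⟨ξ, hξ⟩ := LinearMap.exists_extend (proj i ∘ₗ g)
  refine ⟨ξ, fun c => ?_⟩
  have hfg : f (g (f.rangeRestrict c)) = f c :=
    congrArg Subtype.val (LinearMap.congr_fun hg (f.rangeRestrict c))
  have hξf : ξ (f c) = g (f.rangeRestrict c) i := LinearMap.congr_fun hξ (f.rangeRestrict c)
  have hsub : f (g (f.rangeRestrict c) - c) = 0 := by rw [map_sub, hfg, sub_self]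
  exact hξf.trans (sub_eq_zero.1 (h _ hsub))

theorem exists_eq_sum_fin_tmul {R M N : Type*} [CommSemiring R] [AddCommMonoid M] [Module R M]
    [AddCommMonoid N] [Module R N] (t : M ⊗[R] N) :
    ∃ (n : ℕ) (x : Fin n → M) (y : Fin n → N), t = ∑ j, x j ⊗ₜ[R] y j := by
  obtain ⟨s, rfl⟩ := TensorProduct.exists_finset t
  exact ⟨_, fun j => (s.equivFin.symm j).1.1, fun j => (s.equivFin.symm j).1.2, by
    rw [s.equivFin.symm.sum_comp fun p => p.1.1 ⊗ₜ[R] p.1.2, s.sum_coe_sort fun p => p.1 ⊗ₜ p.2]⟩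

section TensorNorm

variable {k V W : Type*} [NormedField k] [NormedAddCommGroup V] [NormedSpace k V]
  [NormedAddCommGroup W] [NormedSpace k W]

theorem tensorNorm_sum_tmul_le {ι : Type*} [Fintype ι] (v : ι → V) (w : ι → W) :
    tensorNorm (∑ i, v i ⊗ₜ[k] w i) ≤ ⨆ i, ‖v i‖ * ‖w i‖ := by
  let e := (Fintype.equivFin ι).symm
  refine csInf_le ⟨0, ?_⟩ ⟨_, v ∘ e, w ∘ e, (e.sum_comp fun i => v i ⊗ₜ[k] w i).symm,
    (e.iSup_comp (g := fun i => ‖v i‖ * ‖w i‖)).symm⟩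
  rintro _ ⟨n, x, y, -, rfl⟩
  exact Real.iSup_nonneg fun _ => by positivity

theorem le_tensorNorm {r : ℝ} {t : V ⊗[k] W}
    (h : ∀ (n : ℕ) (x : Fin n → V) (y : Fin n → W), t = ∑ j, x j ⊗ₜ[k] y j →
      r ≤ ⨆ j, ‖x j‖ * ‖y j‖) : r ≤ tensorNorm t := by
  obtain ⟨n, x, y, ht⟩ := exists_eq_sum_fin_tmul t
  refine le_csInf ⟨_, n, x, y, ht, rfl⟩ ?_
  rintro _ ⟨n, x, y, ht, rfl⟩
  exact h n x y ht

theorem tensorNorm_nonneg (t : V ⊗[k] W) : 0 ≤ tensorNorm t :=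
  le_tensorNorm fun _ _ _ _ => Real.iSup_nonneg fun _ => by positivity

theorem tensorNorm_rTensor_subtype [IsUltrametricDist V] (S : Submodule k V) (t : S ⊗[k] W) :
    tensorNorm (S.subtype.rTensor W t) = tensorNorm t := by
  classical
  refine le_antisymm (le_tensorNorm fun n x y h => ?_) (le_tensorNorm fun n x y h => ?_)
  · simpa [h] using tensorNorm_sum_tmul_le (k := k) (fun j => (x j : V)) y
  · obtain ⟨P, hPS, hPx⟩ := exists_retraction_norm_le S (Finset.univ.image x)
    have ht : t = ∑ j, P (x j) ⊗ₜ[k] y j := by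
      simpa [← LinearMap.comp_apply, ← LinearMap.rTensor_comp, hPS] using congrArg (P.rTensor W) h
    calc tensorNorm t ≤ ⨆ j, ‖P (x j)‖ * ‖y j‖ := ht ▸ tensorNorm_sum_tmul_le _ y
      _ ≤ ⨆ j, ‖x j‖ * ‖y j‖ := Finite.ciSup_mono fun j =>
        mul_le_mul_of_nonneg_right (hPx _ (by simp)) (norm_nonneg _)

theorem mul_norm_lid_rTensor_le_tensorNorm [IsUltrametricDist W] {r : ℝ} (hr : 0 ≤ r)
    {ξ : V →ₗ[k] k} (hξ : ∀ x, r * ‖ξ x‖ ≤ ‖x‖) (t : V ⊗[k] W) :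
    r * ‖TensorProduct.lid k W (ξ.rTensor W t)‖ ≤ tensorNorm t := by
  refine le_tensorNorm fun n x y h => ?_
  calc r * ‖TensorProduct.lid k W (ξ.rTensor W t)‖ = r * ‖∑ j, ξ (x j) • y j‖ := by simp [h]
    _ ≤ r * ⨆ j, ‖ξ (x j) • y j‖ := mul_le_mul_of_nonneg_left
      (by simpa using IsUltrametricDist.norm_tsum_le fun j => ξ (x j) • y j) hr
    _ = ⨆ j, r * ‖ξ (x j)‖ * ‖y j‖ := by
      simp only [Real.mul_iSup_of_nonneg hr, norm_smul, mul_assoc]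
    _ ≤ ⨆ j, ‖x j‖ * ‖y j‖ := Finite.ciSup_mono fun j =>
      mul_le_mul_of_nonneg_right (hξ (x j)) (norm_nonneg _)

theorem mul_norm_le_tensorNorm_sum_tmul [IsUltrametricDist V] [IsUltrametricDist W] {ι : Type*}
    [Fintype ι] {r : ℝ} (hr : 0 ≤ r) {v : ι → V} {i : ι}
    (hv : ∀ c : ι → k, r * ‖c i‖ ≤ ‖∑ j, c j • v j‖) (w : ι → W) :
    r * ‖w i‖ ≤ tensorNorm (∑ j, v j ⊗ₜ[k] w j) := by
  classical
  rcases hr.eq_or_lt with rfl | hr'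
  · simpa using tensorNorm_nonneg _
  obtain ⟨ξ, hξ⟩ := exists_linearMap_apply_sum_smul_eq (k := k) (v := v) (i := i) fun c hc =>
    norm_le_zero_iff.1 (le_of_mul_le_mul_left (by simpa [hc] using hv c) hr')
  have hξv (j : ι) : ξ (v j) = Pi.single (M := fun _ => k) j 1 i := by
    simpa [Pi.single_apply] using hξ (Pi.single j 1)
  let S := Submodule.span k (Set.range v)
  have hξS (s : S) : r * ‖ξ.domRestrict S s‖ ≤ ‖s‖ := by
    obtain ⟨c, hc⟩ := (Submodule.mem_span_range_iff_exists_fun k).1 s.2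
    simpa [← hc, hξ] using hv c
  let t : S ⊗[k] W := ∑ j, (⟨v j, Submodule.subset_span ⟨j, rfl⟩⟩ : S) ⊗ₜ[k] w j
  have ht : S.subtype.rTensor W t = ∑ j, v j ⊗ₜ[k] w j := by simp [t]
  have hwi : TensorProduct.lid k W ((ξ.domRestrict S).rTensor W t) = w i := by
    simp [t, hξv, Pi.single_apply]
  rw [← ht, tensorNorm_rTensor_subtype, ← hwi]
  exact mul_norm_lid_rTensor_le_tensorNorm hr hξS t

theorem tensorNorm_of_alpha_cartesian_general (hV : IsNonarchimedean (norm : V → ℝ))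
    (hW : IsNonarchimedean (norm : W → ℝ)) {ι : Type*} [Fintype ι] {α : ℝ} (hα : 0 < α) {v : ι → V}
    (hcart : ∀ c : ι → k, α⁻¹ * (⨆ i, ‖c i‖ * ‖v i‖) ≤ ‖∑ i, c i • v i‖) (w : ι → W) :
    α⁻¹ * (⨆ i, ‖v i‖ * ‖w i‖) ≤ tensorNorm (∑ i, v i ⊗ₜ[k] w i) ∧
    tensorNorm (∑ i, v i ⊗ₜ[k] w i) ≤ ⨆ i, ‖v i‖ * ‖w i‖ := by
  have := IsUltrametricDist.isUltrametricDist_of_isNonarchimedean_norm hV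
  have := IsUltrametricDist.isUltrametricDist_of_isNonarchimedean_norm hW
  refine ⟨?_, tensorNorm_sum_tmul_le v w⟩
  rw [Real.mul_iSup_of_nonneg (inv_nonneg.2 hα.le)]
  refine Real.iSup_le (fun i => ?_) (tensorNorm_nonneg _)
  have hcoord (c : ι → k) : α⁻¹ * ‖v i‖ * ‖c i‖ ≤ ‖∑ j, c j • v j‖ :=
    calc α⁻¹ * ‖v i‖ * ‖c i‖ = α⁻¹ * (‖c i‖ * ‖v i‖) := by ring
      _ ≤ α⁻¹ * ⨆ j, ‖c j‖ * ‖v j‖ := by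
        gcongr
        exact Finite.le_ciSup (fun j => ‖c j‖ * ‖v j‖) i
      _ ≤ ‖∑ j, c j • v j‖ := hcart c
  rw [← mul_assoc]
  exact mul_norm_le_tensorNorm_sum_tmul (by positivity) hcoord w

end TensorNorm

open TensorProduct in
/-- If `v 1, …, v n` is a linearly independent `α`-cartesian family of `V`, then for all
`w 1, …, w n ∈ W`, with `t = ∑ i, v i ⊗ w i`,
`α⁻¹ * max_i ‖v i‖ * ‖w i‖ ≤ ‖t‖_{V⊗W} ≤ max_i ‖v i‖ * ‖w i‖`. -/
theorem tensorNorm_of_alpha_cartesian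
    {k V W : Type*} [NormedField k] [CompleteSpace k]
    (hk : IsNonarchimedean (norm : k → ℝ))
    [NormedAddCommGroup V] [NormedSpace k V]
    (hV : IsNonarchimedean (norm : V → ℝ))
    [NormedAddCommGroup W] [NormedSpace k W]
    (hW : IsNonarchimedean (norm : W → ℝ))
    (α : ℝ) (hα : 1 < α) (n : ℕ) (v : Fin n → V)
    (hli : LinearIndependent k v)
    (hcart : ∀ c : Fin n → k,
      α⁻¹ * (⨆ i, ‖c i‖ * ‖v i‖) ≤ ‖∑ i, c i • v i‖ ∧
      ‖∑ i, c i • v i‖ ≤ ⨆ i, ‖c i‖ * ‖v i‖)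
    (w : Fin n → W) :
    α⁻¹ * (⨆ i, ‖v i‖ * ‖w i‖) ≤ tensorNorm (∑ i, v i ⊗ₜ[k] w i) ∧
    tensorNorm (∑ i, v i ⊗ₜ[k] w i) ≤ ⨆ i, ‖v i‖ * ‖w i‖ :=
  tensorNorm_of_alpha_cartesian_general hV hW (zero_lt_one.trans hα) (fun c => (hcart c).1) w
end

section
/- Let X be a topological space, Y a Hausdorff topological space, f : X → Y a continuous map, and W an open subset of X whose closure is compact. Let ∂W denote the topological boundary of W in X, set U = W \ f⁻¹(f(∂W)) and V = Y \ f(∂W). Then f maps U into V, and the restriction f|_U : U → V is topologically proper: for every compact subset K of V, the set f⁻¹(K) ∩ U is compact. -/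
/-!
A closed `K` missing `f(∂W)` has a preimage missing `∂W`, so it meets `W` and its closure in the
same set. Hence `f⁻¹(K) ∩ U` is relatively closed in the compact set `closure W`.
-/

section

variable {X Y : Type*} [TopologicalSpace X] {f : X → Y} {W : Set X}

theorem preimage_inter_sdiff_preimage_image_frontier {K : Set Y} (hK : K ⊆ (f '' frontier W)ᶜ) :
    f ⁻¹' K ∩ (W \ f ⁻¹' (f '' frontier W)) = closure W ∩ f ⁻¹' K := by
  apply Set.Subset.antisymm
  · rintro x ⟨hxK, hxW, -⟩
    exact ⟨subset_closure hxW, hxK⟩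
  · rintro x ⟨hxW, hxK⟩
    have hx_frontier : x ∉ frontier W := fun hx => hK hxK (Set.mem_image_of_mem f hx)
    have hx_interior : x ∈ interior W := closure_sdiff_frontier W ▸ ⟨hxW, hx_frontier⟩
    exact ⟨hxK, interior_subset hx_interior, hK hxK⟩

theorem restriction_topologically_proper_general [TopologicalSpace Y]
    (hf : ContinuousOn f (closure W)) (hWc : IsCompact (closure W)) :
    Set.MapsTo f (W \ f ⁻¹' (f '' frontier W)) (f '' frontier W)ᶜ ∧
    ∀ K : Set Y, K ⊆ (f '' frontier W)ᶜ → IsClosed K →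
      IsCompact (f ⁻¹' K ∩ (W \ f ⁻¹' (f '' frontier W))) := by
  refine ⟨fun _ hx => hx.2, fun K hKV hK => ?_⟩
  rw [preimage_inter_sdiff_preimage_image_frontier hKV]
  have hclosed : IsClosed (closure W ∩ f ⁻¹' K) :=
    hf.preimage_isClosed_of_isClosed isClosed_closure hK
  exact hWc.of_isClosed_subset hclosed Set.inter_subset_left

end

/-- Let `f : X → Y` be a continuous map with `Y` Hausdorff, and let `W` be an open subset
of `X` with compact closure.  Put `U = W \ f⁻¹(f(∂W))` and `V = Y \ f(∂W)` (i.e. the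
complement of `f(∂W)`).  Then `f` maps `U` into `V`, and the restriction `f|_U : U → V`
is topologically proper: for every compact `K ⊆ V` the set `f⁻¹(K) ∩ U` is compact. -/
theorem restriction_topologically_proper
    {X Y : Type*} [TopologicalSpace X] [TopologicalSpace Y] [T2Space Y]
    {f : X → Y} (hf : Continuous f) {W : Set X} (hW : IsOpen W)
    (hWc : IsCompact (closure W)) :
    Set.MapsTo f (W \ f ⁻¹' (f '' frontier W)) (f '' frontier W)ᶜ ∧
    ∀ K : Set Y, K ⊆ (f '' frontier W)ᶜ → IsCompact K →
      IsCompact (f ⁻¹' K ∩ (W \ f ⁻¹' (f '' frontier W))) :=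
  (restriction_topologically_proper_general hf.continuousOn hWc).imp_right
    fun hproper K hKV hK => hproper K hKV hK.isClosed
end

section
/- Let k be a field complete with respect to a non-archimedean absolute value |·|. Let L and L' be field extensions of k, each equipped with a non-archimedean absolute value extending that of k. Let a ∈ L be algebraic over k with minimal polynomial P ∈ k[X], and let b ∈ L' be a root of P (i.e. P(b) = 0). Then |b| = |a|. In particular, if b ∈ L' satisfies |b| ≠ |a|, then P(b) ≠ 0. -/
/-!
The absolute value of an algebraic element `a` is its spectral norm, which depends only on the
minimal polynomial. If the absolute value of `k` is nontrivial, this is the uniqueness of its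
extension to `k⟮a⟯`, by completeness. If it is trivial, that is, if `‖c‖ ≤ 1` for all `c : k`, then
spectral norms are at most `1`; as they bound the absolute values of both `a` and `a⁻¹`, all of
these are equal to `1` when `a ≠ 0`.
-/

open Polynomial IntermediateField

/-- The normed algebra structure on a given `k`-algebra whose structure map does not increase norms;
it keeps the given algebra structure, so it can be installed as a local instance. -/
abbrev normedAlgebraOfNormAlgebraMapLE {k L : Type*} [NormedField k] [SeminormedRing L]
    [Algebra k L] (h : ∀ c : k, ‖algebraMap k L c‖ ≤ ‖c‖) : NormedAlgebra k L where
  norm_smul_le c x := by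
    rw [Algebra.smul_def]
    exact (norm_mul_le _ _).trans (mul_le_mul_of_nonneg_right (h c) (norm_nonneg x))

section SpectralNorm

variable {k L : Type*} [NormedField k] [Field L] [Algebra k L]

theorem spectralNorm_le_one_of_forall_norm_le_one (hk : ∀ c : k, ‖c‖ ≤ 1) {a : L}
    (ha : IsAlgebraic k a) : spectralNorm k L a ≤ 1 :=
  (spectralValue_le_one_iff (minpoly.monic ha.isIntegral)).2 fun _ => hk _

theorem spectralNorm_eq_of_aeval_minpoly_eq_zero {L' : Type*} [Field L'] [Algebra k L'] {a : L}
    (ha : IsAlgebraic k a) {b : L'} (hb : aeval b (minpoly k a) = 0) :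
    spectralNorm k L' b = spectralNorm k L a :=
  congrArg spectralValue ((minpoly.eq_iff_aeval_minpoly_eq_zero ha.isIntegral).2 hb).symm

end SpectralNorm

section NormedAlgebra

variable {k L : Type*} [NormedField L]

theorem norm_le_spectralNorm_of_isAlgebraic [NormedField k] [IsUltrametricDist k]
    [NormedAlgebra k L] {a : L} (ha : IsAlgebraic k a) : ‖a‖ ≤ spectralNorm k L a :=
  have : IsUltrametricDist L := .of_normedAlgebra k
  norm_le_spectralNorm (f := (NormedAlgebra.toMulAlgebraNorm k L).toAlgebraNorm)
    (NormedAlgebra.toMulAlgebraNorm k L).toMulRingNorm.isPowMul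
    IsUltrametricDist.isNonarchimedean_norm ha

theorem norm_eq_spectralNorm_of_forall_norm_le_one [NormedField k] [NormedAlgebra k L]
    (hk : ∀ c : k, ‖c‖ ≤ 1) {a : L} (ha : IsAlgebraic k a) : ‖a‖ = spectralNorm k L a := by
  have : IsUltrametricDist k :=
    IsUltrametricDist.isUltrametricDist_of_forall_norm_natCast_le_one fun n => hk n
  have norm_le_one {x : L} (hx : IsAlgebraic k x) : ‖x‖ ≤ 1 :=
    (norm_le_spectralNorm_of_isAlgebraic hx).trans
      (spectralNorm_le_one_of_forall_norm_le_one hk hx)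
  rcases eq_or_ne a 0 with rfl | ha0
  · rw [norm_zero, spectralNorm_zero]
  have one_le_norm : 1 ≤ ‖a‖ := by
    rw [← inv_le_one₀ (norm_pos_iff.2 ha0), ← norm_inv]
    exact norm_le_one ha.inv
  exact (norm_le_spectralNorm_of_isAlgebraic ha).antisymm
    ((spectralNorm_le_one_of_forall_norm_le_one hk ha).trans one_le_norm)

theorem norm_eq_spectralNorm_of_nontriviallyNormedField [NontriviallyNormedField k]
    [CompleteSpace k] [IsUltrametricDist k] [NormedAlgebra k L] {a : L} (ha : IsAlgebraic k a) :
    ‖a‖ = spectralNorm k L a := by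
  have : Algebra.IsAlgebraic k k⟮a⟯ := isAlgebraic_adjoin_simple ha.isIntegral
  calc ‖a‖ = ‖AdjoinSimple.gen k a‖ := rfl
    _ = spectralNorm k k⟮a⟯ (AdjoinSimple.gen k a) := NormedAlgebra.norm_eq_spectralNorm k _
    _ = spectralNorm k L a := spectralNorm.eq_of_tower _

theorem norm_eq_spectralNorm_of_isAlgebraic [NormedField k] [CompleteSpace k]
    [IsUltrametricDist k] [NormedAlgebra k L] {a : L} (ha : IsAlgebraic k a) :
    ‖a‖ = spectralNorm k L a := by
  by_cases hk : ∀ c : k, ‖c‖ ≤ 1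
  · exact norm_eq_spectralNorm_of_forall_norm_le_one hk ha
  · push Not at hk
    let _ : NontriviallyNormedField k := { non_trivial := hk }
    exact norm_eq_spectralNorm_of_nontriviallyNormedField ha

end NormedAlgebra

/-- Let `k` be a field complete with respect to a non-archimedean absolute value and let
`L`, `L'` be field extensions of `k`, each equipped with a non-archimedean absolute value
extending that of `k`.  If `a ∈ L` is algebraic over `k` with minimal polynomial `P`,
then every root `b ∈ L'` of `P` satisfies `|b| = |a|`; in particular, if `|b| ≠ |a|` then
`P(b) ≠ 0`. -/
theorem abs_eq_of_root_minpoly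
    {k L L' : Type*} [NormedField k] [CompleteSpace k]
    [NormedField L] [NormedField L'] [Algebra k L] [Algebra k L']
    (hk : IsNonarchimedean (norm : k → ℝ))
    (hL : IsNonarchimedean (norm : L → ℝ))
    (hL' : IsNonarchimedean (norm : L' → ℝ))
    (hext : ∀ c : k, ‖algebraMap k L c‖ = ‖c‖)
    (hext' : ∀ c : k, ‖algebraMap k L' c‖ = ‖c‖)
    (a : L) (ha : IsAlgebraic k a) :
    (∀ b : L', Polynomial.aeval b (minpoly k a) = 0 → ‖b‖ = ‖a‖) ∧
    (∀ b : L', ‖b‖ ≠ ‖a‖ → Polynomial.aeval b (minpoly k a) ≠ 0) := by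
  have : IsUltrametricDist k := IsUltrametricDist.isUltrametricDist_of_isNonarchimedean_norm hk
  let _ : NormedAlgebra k L := normedAlgebraOfNormAlgebraMapLE fun c => (hext c).le
  let _ : NormedAlgebra k L' := normedAlgebraOfNormAlgebraMapLE fun c => (hext' c).le
  have norm_eq (b : L') (hb : aeval b (minpoly k a) = 0) : ‖b‖ = ‖a‖ := by
    have hb_alg : IsAlgebraic k b := ⟨minpoly k a, minpoly.ne_zero ha.isIntegral, hb⟩
    calc ‖b‖ = spectralNorm k L' b := norm_eq_spectralNorm_of_isAlgebraic hb_alg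
      _ = spectralNorm k L a := spectralNorm_eq_of_aeval_minpoly_eq_zero ha hb
      _ = ‖a‖ := (norm_eq_spectralNorm_of_isAlgebraic ha).symm
  exact ⟨norm_eq, fun b hne hb => hne (norm_eq b hb)⟩
end

section
/- Let k be a field complete with respect to a non-archimedean absolute value. Let L and L' be field extensions of k, each equipped with a non-archimedean absolute value extending that of k. Let a ∈ L and a' ∈ L' be algebraic over k with |a| ≠ |a'|. Then there exists a polynomial g ∈ k[T] such that g(a) = 0 and g(a') = 1. -/
/-!
If `g(a') ≠ 0` for the minimal polynomial `g` of `a`, then `g` is prime to the minimal polynomial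
of `a'`, and a Bézout relation gives a multiple of `g` with value `1` at `a'`. Otherwise `a ↦ a'`
defines a `k`-algebra homomorphism `φ : k(a) → L'`. It is bounded because `k(a)` is finite over the
complete field `k`: when `k` is trivially valued, expanding in a basis bounds both `|φ x|` and
`|x⁻¹|` by constants. A bounded homomorphism between multiplicative norms is contracting, as
`|φ x| ^ n ≤ C * |x| ^ n` for all `n`. Applying this to `x⁻¹` as well shows that `φ` is an isometry,
so `|a| = |a'|`.
-/

open Polynomial IntermediateField

theorem exists_dvd_and_aeval_eq_one {k B : Type*} [Field k] [Ring B] [IsDomain B] [Algebra k B]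
    {b : B} (hb : IsIntegral k b) {p : k[X]} (hp : aeval b p ≠ 0) :
    ∃ g : k[X], p ∣ g ∧ aeval b g = 1 := by
  have hcoprime : IsCoprime (minpoly k b) p :=
    (minpoly.irreducible hb).coprime_iff_not_dvd.2 (mt minpoly.dvd_iff.1 hp)
  obtain ⟨u, v, huv⟩ := hcoprime
  exact ⟨v * p, dvd_mul_left p v, by simpa using congrArg (aeval b) huv⟩

theorem exists_pos_forall_norm_apply_le_of_forall_norm_le_one {k E V : Type*} [NormedField k]
    (hk : ∀ c : k, ‖c‖ ≤ 1) [AddCommGroup E] [Module k E] [FiniteDimensional k E]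
    [SeminormedAddCommGroup V] [NormedSpace k V] (f : E →ₗ[k] V) :
    ∃ C, 0 < C ∧ ∀ x, ‖f x‖ ≤ C := by
  let b := Module.finBasis k E
  refine ⟨1 + ∑ i, ‖f (b i)‖, by positivity, fun x ↦ ?_⟩
  calc
    ‖f x‖ = ‖∑ i, b.repr x i • f (b i)‖ := by
      simp_rw [← map_smul, ← map_sum, b.sum_repr]
    _ ≤ ∑ i, ‖b.repr x i • f (b i)‖ := norm_sum_le _ _
    _ ≤ ∑ i, ‖f (b i)‖ := by
      gcongr with i
      rw [norm_smul]
      exact mul_le_of_le_one_left (norm_nonneg _) (hk _)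
    _ ≤ 1 + ∑ i, ‖f (b i)‖ := le_add_of_nonneg_left zero_le_one

section AlgHom

variable {k K A : Type*} [NormedField k] [NormedDivisionRing K] [NormedAlgebra k K]
  [FiniteDimensional k K] [SeminormedRing A] [NormedAlgebra k A]

theorem algHom_isBounded_of_forall_norm_le_one (hk : ∀ c : k, ‖c‖ ≤ 1) (φ : K →ₐ[k] A) :
    (φ : K →+* A).IsBounded := by
  obtain ⟨C, hC, hφ⟩ := exists_pos_forall_norm_apply_le_of_forall_norm_le_one hk φ.toLinearMap
  obtain ⟨D, hD, hK⟩ :=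
    exists_pos_forall_norm_apply_le_of_forall_norm_le_one hk (LinearMap.id : K →ₗ[k] K)
  refine ⟨C * D, mul_pos hC hD, fun x ↦ ?_⟩
  obtain rfl | hx := eq_or_ne x 0
  · simp
  have one_le : 1 ≤ D * ‖x‖ :=
    calc
      1 = ‖x⁻¹‖ * ‖x‖ := by rw [← norm_mul, inv_mul_cancel₀ hx, norm_one]
      _ ≤ D * ‖x‖ := by gcongr; exact hK x⁻¹
  calc
    ‖φ x‖ ≤ C := hφ x
    _ ≤ C * (D * ‖x‖) := le_mul_of_one_le_right hC.le one_le
    _ = C * D * ‖x‖ := (mul_assoc _ _ _).symm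

variable [CompleteSpace k]

theorem algHom_isBounded (φ : K →ₐ[k] A) : (φ : K →+* A).IsBounded := by
  by_cases hk : ∃ c : k, 1 < ‖c‖
  · let : NontriviallyNormedField k := { ‹NormedField k› with non_trivial := hk }
    exact φ.toLinearMap.toContinuousLinearMap.bound
  · push Not at hk
    exact algHom_isBounded_of_forall_norm_le_one hk φ

theorem norm_algHom_apply [NormOneClass A] [NormMulClass A] (φ : K →ₐ[k] A) (x : K) :
    ‖φ x‖ = ‖x‖ := by
  have contracting (y : K) : ‖φ y‖ ≤ ‖y‖ :=
    contraction_of_isPowMul (fun z n _ ↦ norm_pow z n) (algHom_isBounded φ) y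
  obtain rfl | hx := eq_or_ne x 0
  · simp
  have norm_mul_norm_inv : ‖φ x‖ * ‖φ x⁻¹‖ = 1 := by
    rw [← norm_mul, ← map_mul, mul_inv_cancel₀ hx, map_one, norm_one]
  refine (contracting x).antisymm ?_
  calc
    ‖x‖ = ‖φ x‖ * ‖φ x⁻¹‖ * ‖x‖ := by rw [norm_mul_norm_inv, one_mul]
    _ ≤ ‖φ x‖ * ‖x⁻¹‖ * ‖x‖ := by gcongr; exact contracting x⁻¹
    _ = ‖φ x‖ := by rw [mul_assoc, ← norm_mul, inv_mul_cancel₀ hx, norm_one, mul_one]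

end AlgHom

theorem norm_eq_of_aeval_minpoly_eq_zero {k L A : Type*} [NormedField k] [CompleteSpace k]
    [NormedField L] [NormedAlgebra k L] [SeminormedRing A] [NormOneClass A] [NormMulClass A]
    [NormedAlgebra k A] {a : L} (ha : IsIntegral k a) {a' : A}
    (h : aeval a' (minpoly k a) = 0) : ‖a‖ = ‖a'‖ := by
  have : FiniteDimensional k k⟮a⟯ := adjoin.finiteDimensional ha
  let pb := adjoin.powerBasis ha
  have hgen : aeval a' (minpoly k pb.gen) = 0 := by
    rwa [adjoin.powerBasis_gen, minpoly_gen]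
  calc
    ‖a‖ = ‖pb.gen‖ := by rw [adjoin.powerBasis_gen]; rfl
    _ = ‖pb.lift a' hgen pb.gen‖ := (norm_algHom_apply _ _).symm
    _ = ‖a'‖ := by rw [pb.lift_gen]

theorem exists_polynomial_separating_general
    {k L L' : Type*} [NormedField k] [CompleteSpace k]
    [NormedField L] [NormedField L'] [Algebra k L] [Algebra k L']
    (hext : ∀ c : k, ‖algebraMap k L c‖ = ‖c‖)
    (hext' : ∀ c : k, ‖algebraMap k L' c‖ = ‖c‖)
    {a : L} (ha : IsAlgebraic k a) {a' : L'} (ha' : IsAlgebraic k a')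
    (hne : ‖a‖ ≠ ‖a'‖) :
    ∃ g : k[X], aeval a g = 0 ∧ aeval a' g = 1 := by
  let : NormedAlgebra k L :=
    { ‹Algebra k L› with norm_smul_le c x := by rw [Algebra.smul_def, norm_mul, hext] }
  let : NormedAlgebra k L' :=
    { ‹Algebra k L'› with norm_smul_le c x := by rw [Algebra.smul_def, norm_mul, hext'] }
  have not_root : aeval a' (minpoly k a) ≠ 0 :=
    mt (norm_eq_of_aeval_minpoly_eq_zero ha.isIntegral) hne
  obtain ⟨g, hdvd, hg⟩ := exists_dvd_and_aeval_eq_one ha'.isIntegral not_root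
  exact ⟨g, aeval_eq_zero_of_dvd_aeval_eq_zero hdvd (minpoly.aeval k a), hg⟩

/-- Let `k` be a field complete with respect to a non-archimedean absolute value and let
`L`, `L'` be field extensions of `k`, each equipped with a non-archimedean absolute value
extending that of `k`.  If `a ∈ L` and `a' ∈ L'` are algebraic over `k` and
`|a| ≠ |a'|`, then there is a polynomial `g ∈ k[T]` with `g(a) = 0` and `g(a') = 1`. -/
theorem exists_polynomial_separating
    {k L L' : Type*} [NormedField k] [CompleteSpace k]
    [NormedField L] [NormedField L'] [Algebra k L] [Algebra k L']
    (hk : IsNonarchimedean (norm : k → ℝ))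
    (hL : IsNonarchimedean (norm : L → ℝ))
    (hL' : IsNonarchimedean (norm : L' → ℝ))
    (hext : ∀ c : k, ‖algebraMap k L c‖ = ‖c‖)
    (hext' : ∀ c : k, ‖algebraMap k L' c‖ = ‖c‖)
    (a : L) (ha : IsAlgebraic k a) (a' : L') (ha' : IsAlgebraic k a')
    (hne : ‖a‖ ≠ ‖a'‖) :
    ∃ g : Polynomial k, Polynomial.aeval a g = 0 ∧ Polynomial.aeval a' g = 1 :=
  exists_polynomial_separating_general hext hext' ha ha' hne
end

section
/- Let k be a field complete with respect to a non-archimedean absolute value, and let (V_i)_{i∈ℕ} be a sequence of k-Banach spaces together with bounded (continuous) k-linear transition maps τ_i : V_{i+1} → V_i, each having dense image. Then for every sequence (t_i)_{i∈ℕ} with t_i ∈ V_i there exists a sequence (s_i)_{i∈ℕ} with s_i ∈ V_i such that t_i = s_i − τ_i(s_{i+1}) for all i ∈ ℕ. Equivalently, the map ∏_i V_i → ∏_i V_i sending (s_i)_i to (s_i − τ_i(s_{i+1}))_i is surjective. -/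
/-!
A solution of `t i = s i - τ i (s (i + 1))` is a point of the inverse limit of the spaces `V i`
along the translated maps `y ↦ t i + τ i y`. Translations are homeomorphisms, so these maps still
have dense range, and the topological Mittag-Leffler theorem for completely metrizable spaces
provides such a point: given continuous maps `f n : X (n + 1) → X n` with dense range, choose
`x (n + 1)` so that `f n (x (n + 1))` approximates `x n` well enough for the images of the two in
each of `X 0, …, X n` to be `2⁻ⁿ`-close. The images of the `x n` in a fixed `X i` then form a Cauchy
sequence, and the limits form a point of the inverse limit.
-/

open Filter Topology TopologicalSpace

section InverseSequence

variable {X : ℕ → Type*}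

/-- The composite transition map `f m ∘ ⋯ ∘ f (n - 1) : X n → X m` of an inverse sequence. -/
def transitionMap (f : ∀ n, X (n + 1) → X n) {m n : ℕ} (h : m ≤ n) (x : X n) : X m :=
  Nat.decreasingInduction (motive := fun i _ => X i) (fun i _ => f i) x h

/-- The inverse limit of an inverse sequence, as the set of coherent families in the product. -/
def inverseSequenceLimit (f : ∀ n, X (n + 1) → X n) : Set (∀ n, X n) :=
  {s | ∀ n, f n (s (n + 1)) = s n}

theorem transitionMap_self (f : ∀ n, X (n + 1) → X n) (n : ℕ) :
    transitionMap f (le_refl n) = id :=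
  funext fun _ => Nat.decreasingInduction_self _ _

theorem transitionMap_succ (f : ∀ n, X (n + 1) → X n) {m n : ℕ} (h : m ≤ n) :
    transitionMap f (Nat.le_succ_of_le h) = transitionMap f h ∘ f n :=
  funext fun _ => Nat.decreasingInduction_succ _ _ h _

theorem map_transitionMap_succ (f : ∀ n, X (n + 1) → X n) {m n : ℕ} (h : m + 1 ≤ n) (x : X n) :
    f m (transitionMap f h x) = transitionMap f (Nat.le_of_succ_le h) x :=
  (Nat.decreasingInduction_succ_left _ _ h _).symm

theorem continuous_transitionMap [∀ n, TopologicalSpace (X n)] {f : ∀ n, X (n + 1) → X n}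
    (hf : ∀ n, Continuous (f n)) {m n : ℕ} (h : m ≤ n) : Continuous (transitionMap f h) := by
  induction n, h using Nat.le_induction with
  | base => exact transitionMap_self f m ▸ continuous_id
  | succ n h ih => exact transitionMap_succ f h ▸ ih.comp (hf n)

theorem exists_forall_dist_transitionMap_lt [∀ n, PseudoMetricSpace (X n)]
    {f : ∀ n, X (n + 1) → X n} (hf : ∀ n, Continuous (f n)) {n : ℕ} (hdense : DenseRange (f n))
    (x : X n) {ε : ℝ} (hε : 0 < ε) :
    ∃ y, ∀ m (h : m ≤ n), dist (transitionMap f h x) (transitionMap f h (f n y)) < ε := by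
  have hnear : ∀ᶠ z in 𝓝 x, ∀ m : Set.Iic n,
      dist (transitionMap f m.2 x) (transitionMap f m.2 z) < ε := by
    refine eventually_all.2 fun m => ?_
    filter_upwards [(continuous_transitionMap hf m.2).continuousAt (Metric.ball_mem_nhds _ hε)]
      with z hz using Metric.mem_ball'.1 hz
  obtain ⟨y, hy⟩ := hdense.mem_nhds hnear
  exact ⟨y, fun m h => hy ⟨m, h⟩⟩

theorem exists_mem_inverseSequenceLimit_dist_le [∀ n, MetricSpace (X n)]
    [∀ n, CompleteSpace (X n)] {f : ∀ n, X (n + 1) → X n} (hf : ∀ n, Continuous (f n))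
    (x : ∀ n, X n) {C : ℝ}
    (hx : ∀ n m (h : m ≤ n),
      dist (transitionMap f h (x n)) (transitionMap f h (f n (x (n + 1)))) ≤ C / 2 / 2 ^ n) :
    ∃ s ∈ inverseSequenceLimit f, dist (x 0) (s 0) ≤ C := by
  let approx (i k : ℕ) : X i := transitionMap f (Nat.le_add_right i k) (x (i + k))
  have map_approx (i k : ℕ) : f i (approx (i + 1) k) = approx i (k + 1) := by
    have approx_eq {n : ℕ} (h : i ≤ n) (hn : n = i + (k + 1)) :
        transitionMap f h (x n) = approx i (k + 1) := by
      subst hn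
      rfl
    exact (map_transitionMap_succ f _ _).trans (approx_eq _ (Nat.add_right_comm i 1 k))
  have hC : 0 ≤ C / 2 := by simpa using dist_nonneg.trans (hx 0 0 le_rfl)
  have dist_approx_le (i k : ℕ) : dist (approx i k) (approx i (k + 1)) ≤ C / 2 / 2 ^ k :=
    calc dist (approx i k) (approx i (k + 1))
      _ = dist (approx i k) (transitionMap f (Nat.le_add_right i k) (f (i + k) (x (i + k + 1)))) :=
        congrArg _ (congrFun (transitionMap_succ f _) _)
      _ ≤ C / 2 / 2 ^ (i + k) := hx (i + k) i _
      _ ≤ C / 2 / 2 ^ k := by gcongr <;> simp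
  choose s hs using fun i =>
    cauchySeq_tendsto_of_complete (cauchySeq_of_le_geometric_two (dist_approx_le i))
  refine ⟨s, fun i => ?_, ?_⟩
  · have hmap : Tendsto (fun k => approx i (k + 1)) atTop (𝓝 (f i (s (i + 1)))) := by
      simpa only [Function.comp_def, map_approx] using ((hf i).tendsto _).comp (hs (i + 1))
    exact tendsto_nhds_unique hmap ((tendsto_add_atTop_iff_nat 1).2 (hs i))
  · simpa only [approx, transitionMap_self, id] using
      dist_le_of_le_geometric_two_of_tendsto₀ (dist_approx_le 0) (hs 0)

theorem dense_eval_zero_image_inverseSequenceLimit [∀ n, TopologicalSpace (X n)]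
    [∀ n, IsCompletelyMetrizableSpace (X n)] {f : ∀ n, X (n + 1) → X n}
    (hf : ∀ n, Continuous (f n)) (hdense : ∀ n, DenseRange (f n)) :
    Dense (Function.eval 0 '' inverseSequenceLimit f) := by
  let := fun n => upgradeIsCompletelyMetrizable (X n)
  refine Metric.dense_iff.2 fun x₀ r hr => ?_
  choose next hnext using fun n x =>
    exists_forall_dist_transitionMap_lt hf (hdense n) x (ε := r / 2 / 2 / 2 ^ n) (by positivity)
  let x (n : ℕ) : X n := Nat.rec x₀ next n
  obtain ⟨s, hs, hdist⟩ := exists_mem_inverseSequenceLimit_dist_le hf x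
    fun n m h => (hnext n (x n) m h).le
  exact ⟨s 0, Metric.mem_ball'.2 (hdist.trans_lt (half_lt_self hr)), s, hs, rfl⟩

end InverseSequence

theorem telescope_surjective_of_denseRange_general {V : ℕ → Type*} [∀ i, AddGroup (V i)]
    [∀ i, TopologicalSpace (V i)] [∀ i, SeparatelyContinuousAdd (V i)]
    [∀ i, IsCompletelyMetrizableSpace (V i)] (τ : ∀ i, V (i + 1) → V i)
    (hτ : ∀ i, Continuous (τ i)) (hdense : ∀ i, DenseRange (τ i)) (t : ∀ i, V i) :
    ∃ s : ∀ i, V i, ∀ i, t i = s i - τ i (s (i + 1)) := by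
  let f (i : ℕ) (y : V (i + 1)) : V i := t i + τ i y
  have hf (i : ℕ) : Continuous (f i) := (Homeomorph.addLeft (t i)).continuous.comp (hτ i)
  have hf_dense (i : ℕ) : DenseRange (f i) :=
    (Homeomorph.addLeft (t i)).surjective.denseRange.comp (hdense i)
      (Homeomorph.addLeft (t i)).continuous
  obtain ⟨_, s, hs, -⟩ := (dense_eval_zero_image_inverseSequenceLimit hf hf_dense).nonempty
  exact ⟨s, fun i => eq_sub_of_add_eq (hs i)⟩

/-- Let `k` be a field complete with respect to a non-archimedean absolute value and let
`(V i)_{i ∈ ℕ}` be `k`-Banach spaces (with non-archimedean norms) together with bounded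
`k`-linear transition maps `τ i : V (i+1) → V i`, each with dense image.  Then for every
sequence `(t i)_{i ∈ ℕ}` with `t i ∈ V i` there is a sequence `(s i)_{i ∈ ℕ}` with
`t i = s i - τ i (s (i+1))` for all `i`; that is, the map
`(s i)_i ↦ (s i - τ i (s (i+1)))_i` of `∏ i, V i` to itself is surjective. -/
theorem telescope_surjective_of_denseRange
    {k : Type*} [NormedField k] [CompleteSpace k]
    (hk : IsNonarchimedean (norm : k → ℝ))
    (V : ℕ → Type*) [∀ i, NormedAddCommGroup (V i)] [∀ i, NormedSpace k (V i)]
    [∀ i, CompleteSpace (V i)]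
    (hna : ∀ i, IsNonarchimedean (norm : V i → ℝ))
    (τ : ∀ i, V (i + 1) →L[k] V i)
    (hdense : ∀ i, DenseRange (τ i)) :
    ∀ t : ∀ i, V i, ∃ s : ∀ i, V i, ∀ i, t i = s i - τ i (s (i + 1)) :=
  telescope_surjective_of_denseRange_general (fun i => τ i) (fun i => (τ i).continuous) hdense
end
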